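/- For every n ≥ 1 and every k with 0 ≤ k ≤ ⌊n/2⌋, every complex eigenvalue of the n!×n! matrix whose (u,v) entry is noninv_{(2^k,1^{n−2k})}(v⁻¹·u) (rows and columns indexed by permutations u, v ∈ S_n) is a nonnegative integer; that is, every root in ℂ of its characteristic polynomial is a nonnegative integer. -/

import Mathlib

/-!
Let `M` be the matrix with entries `noninvTwoPow n k (v⁻¹ * u)`. A set of disjoint pairs is a
matching of `Fin n`, encoded as an involution. For an involution `π` and a permutation `g` let
`edgeSign π g = ±1` be the parity of the number of 2-cycles of `π` put out of order by `g`.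
Expanding the conditions `w i < w j` as `(1 + sign) / 2` gives
`M u v = ∑ π, weight π * edgeSign π u⁻¹ * edgeSign π v⁻¹` with nonnegative rational, conjugation
invariant weights (`cast_noninvTwoPow_eq_gram`). So `M = Pᵀ W P` is positive semidefinite, and its
nonzero eigenvalues are eigenvalues of `P Pᵀ W` (`dualGram`), a rational matrix indexed by
involutions.

The map `edgeSign` is a cocycle for conjugation, so it twists the permutation representation on
involutions to a signed one, `involRep`, and `dualGram` is an intertwiner of it. This representation
is multiplicity free by Gelfand's trick: any two involutions are either exchanged by a permutation
with total sign `1`, or both centralized by one with total sign `-1`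
(`exists_exchange_or_reflection`; the alternating paths and cycles formed by two matchings are read
off from the cycles of the product of the two involutions). Hence every intertwiner is symmetric
(`transpose_eq_of_commute_involRep`), and all intertwiners commute.

For such a representation of a symmetric group every rational intertwiner has rational eigenvalues
(`eigenvalue_mem_subfield`), because the characters of symmetric groups are rational: `g` is
conjugate to its powers with exponent prime to the order of `g`. Finally `M` has integer entries, so
its eigenvalues are algebraic integers; being rational and nonnegative, they are natural numbers.
-/

/-- `noninvTwoPow n k w` is the number of sets of `k` pairwise disjoint
two-element subsets `{i,j}` (with `i < j`) of `{1,…,n}` such that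
`w i < w j` holds for each of the `k` chosen pairs. -/
noncomputable def noninvTwoPow (n k : ℕ) (w : Equiv.Perm (Fin n)) : ℕ :=
  letI := Classical.dec
  ((Finset.univ : Finset (Finset (Finset (Fin n)))).filter
    (fun P => P.card = k ∧ (∀ p ∈ P, p.card = 2) ∧
      (∀ p ∈ P, ∀ q ∈ P, p ≠ q → p ∩ q = ∅) ∧
      (∀ p ∈ P, ∀ i ∈ p, ∀ j ∈ p, i < j → w i < w j))).card

/-! ### Rationality of eigenvalues of intertwiners -/

section

open Matrix

theorem exists_nat_trace_of_idempotent {ι : Type*} [Fintype ι] [DecidableEq ι]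
    (e : Matrix ι ι ℝ) (he : e * e = e) : ∃ m : ℕ, e.trace = m := by
  have h : IsIdempotentElem (Matrix.toLin' e) := by
    rw [IsIdempotentElem, Module.End.mul_eq_comp, ← Matrix.toLin'_mul, he]
  have h2 := (LinearMap.IsIdempotentElem.isProj_range _ h).trace
  exact ⟨_, by rw [← h2, Matrix.trace_toLin'_eq]⟩

/-- The orthogonal projection onto the `t`-eigenspace of a symmetric matrix `T`. It is a polynomial
in `T`, so it commutes with everything `T` commutes with. -/
theorem exists_spectral_idempotent {ι : Type*} [Fintype ι] [DecidableEq ι]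
    (T : Matrix ι ι ℝ) (hT : Tᵀ = T) (t : ℝ) (v : ι → ℝ) (hv : v ≠ 0) (hTv : T *ᵥ v = t • v) :
    ∃ e : Matrix ι ι ℝ, e * e = e ∧ eᵀ = e ∧ T * e = t • e ∧ e ≠ 0 ∧
      ∀ X : Matrix ι ι ℝ, Commute T X → Commute e X := by
  have hH : T.IsHermitian := by
    rw [Matrix.IsHermitian, Matrix.conjTranspose_eq_transpose_of_trivial, hT]
  have hi : ∃ i, hH.eigenvalues i = t := by
    have : t ∈ spectrum ℝ T := by
      rw [← Matrix.spectrum_toLin', ← Module.End.hasEigenvalue_iff_mem_spectrum]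
      exact Module.End.hasEigenvalue_of_hasEigenvector (x := v)
        ⟨Module.End.mem_eigenspace_iff.2 (by simpa using hTv), hv⟩
    rw [hH.spectrum_real_eq_range_eigenvalues] at this
    exact this
  obtain ⟨i, hi⟩ := hi
  set φ := Unitary.conjStarAlgAut ℝ (Matrix ι ι ℝ) hH.eigenvectorUnitary with hφ
  have hspec : T = φ (diagonal hH.eigenvalues) := by
    have := hH.spectral_theorem
    exact this
  -- a polynomial taking the value `1` at `t` and `0` at the other eigenvalues
  obtain ⟨q, hq⟩ : ∃ q : Polynomial ℝ, ∀ j, q.eval (hH.eigenvalues j) =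
      if hH.eigenvalues j = t then 1 else 0 := by
    refine ⟨Lagrange.interpolate (Finset.univ.image hH.eigenvalues) id
      (fun x => if x = t then 1 else 0), fun j => ?_⟩
    have := Lagrange.eval_interpolate_at_node (s := Finset.univ.image hH.eigenvalues) (v := id)
      (fun x => if x = t then (1 : ℝ) else 0) (Function.injective_id.injOn)
      (Finset.mem_image_of_mem hH.eigenvalues (Finset.mem_univ j))
    simpa using this
  set d : Matrix ι ι ℝ := diagonal (fun j => if hH.eigenvalues j = t then (1 : ℝ) else 0) with hd
  have hqT : Polynomial.aeval T q = φ d := by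
    have h1 : Polynomial.aeval (diagonal hH.eigenvalues) q = d := by
      have := Polynomial.aeval_algHom_apply (Matrix.diagonalAlgHom ℝ (n := ι) (α := ℝ))
        hH.eigenvalues q
      simp only [Matrix.diagonalAlgHom_apply] at this
      rw [this, hd]
      congr 1
      funext j
      rw [← hq j]
      have := Polynomial.aeval_algHom_apply (Pi.evalAlgHom ℝ (fun _ : ι => ℝ) j) hH.eigenvalues q
      simp only [Pi.evalAlgHom_apply] at this
      rw [← this, Polynomial.coe_aeval_eq_eval]
    have h2 := Polynomial.aeval_algHom_apply (φ : Matrix ι ι ℝ →ₐ[ℝ] Matrix ι ι ℝ)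
      (diagonal hH.eigenvalues) q
    rw [h1] at h2
    rw [hspec]
    exact h2
  refine ⟨φ d, ?_, ?_, ?_, ?_, ?_⟩
  · rw [← map_mul, hd, diagonal_mul_diagonal]
    congr 2
    funext j
    split_ifs <;> simp
  · have : star (φ d) = φ d := by
      rw [← map_star, hd, Matrix.star_eq_conjTranspose, diagonal_conjTranspose]
      congr 2
    rwa [Matrix.star_eq_conjTranspose, Matrix.conjTranspose_eq_transpose_of_trivial] at this
  · have h1 : diagonal hH.eigenvalues * d = t • d := by
      rw [hd, diagonal_mul_diagonal, ← diagonal_smul]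
      congr 1
      funext j
      by_cases h : hH.eigenvalues j = t <;> simp [h]
    calc T * φ d = φ (diagonal hH.eigenvalues) * φ d := by rw [← hspec]
      _ = t • φ d := by rw [← map_mul, h1, map_smul]
  · intro h0
    have h0 : d = 0 := φ.injective (h0.trans (map_zero φ).symm)
    have := congrFun (congrFun h0 i) i
    simp [hd, hi] at this
  · intro X hX
    rw [← hqT]
    rw [Polynomial.aeval_eq_sum_range]
    exact Commute.sum_left _ _ _ fun j _ => (hX.pow_left j).smul_left _

/-- A power of a permutation with exponent prime to the order has the same cycle type. -/
theorem isConj_pow_of_coprime {α : Type*} [Fintype α] [DecidableEq α] (g : Equiv.Perm α) (m : ℕ)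
    (h : m.Coprime (orderOf g)) : IsConj (g ^ m) g := by
  revert h
  refine Equiv.Perm.cycle_induction_on
    (fun g => m.Coprime (orderOf g) → IsConj (g ^ m) g) g ?_ ?_ ?_
  · intro _
    rw [one_pow]
  · intro σ hσ h
    exact ((hσ.pow_iff).2 h).isConj hσ (by rw [Equiv.Perm.support_pow_coprime h])
  · intro σ τ hd _ hσ hτ h
    rw [hd.orderOf] at h
    rw [hd.commute.mul_pow]
    exact Equiv.Perm.Disjoint.isConj_mul (hσ (h.coprime_dvd_right (Nat.dvd_lcm_left _ _)))
      (hτ (h.coprime_dvd_right (Nat.dvd_lcm_right _ _))) (hd.pow_disjoint_pow m m) hd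

/-- The character of a subrepresentation of a symmetric group, cut out by an idempotent
intertwiner `e`, is rational. By strong induction on the order `N` of `g`: the average over
`⟨g⟩` is a projection, so its trace is a natural number; the generators of `⟨g⟩` all contribute the
value at `g`, and the other powers have smaller order. -/
theorem trace_mem_subfield {α ι : Type*} [Fintype α] [DecidableEq α] [Fintype ι] [DecidableEq ι]
    (K : Subfield ℝ) (ρ : Equiv.Perm α →* Matrix ι ι ℝ) (e : Matrix ι ι ℝ) (he : e * e = e)
    (hc : ∀ g, Commute e (ρ g)) (g : Equiv.Perm α) : (e * ρ g).trace ∈ K := by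
  induction hN : orderOf g using Nat.strong_induction_on generalizing g with
  | _ N ih =>
  have hNpos : 0 < N := hN ▸ orderOf_pos g
  have hN0 : (N : ℝ) ≠ 0 := by exact_mod_cast hNpos.ne'
  set S : Matrix ι ι ℝ := ∑ l ∈ Finset.range N, ρ (g ^ l) with hS
  have hgS : ρ g * S = S := by
    have h1 := Finset.sum_range_succ' (fun l => ρ (g ^ l)) N
    rw [Finset.sum_range_succ] at h1
    have h2 : ρ (g ^ N) = ρ (g ^ 0) := by rw [← hN, pow_orderOf_eq_one, pow_zero]
    rw [h2] at h1
    rw [hS, Finset.mul_sum, add_right_cancel h1]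
    refine Finset.sum_congr rfl fun l _ => ?_
    rw [← map_mul, ← pow_succ']
  have hpS : ∀ l : ℕ, ρ (g ^ l) * S = S := by
    intro l
    induction l with
    | zero => simp
    | succ l ihl => rw [pow_succ, map_mul, mul_assoc, hgS, ihl]
  have hSS : S * S = (N : ℝ) • S := by
    conv_lhs => rw [hS, Finset.sum_mul]
    rw [Finset.sum_congr rfl fun l _ => hpS l, Finset.sum_const, Finset.card_range,
      ← Nat.cast_smul_eq_nsmul ℝ]
  have hcS : Commute e S := Commute.sum_right _ _ _ fun l _ => hc _
  -- the average of `ρ` over the powers of `g`, cut down by `e`, is idempotent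
  have hidem : ((N : ℝ)⁻¹ • (e * S)) * ((N : ℝ)⁻¹ • (e * S)) = (N : ℝ)⁻¹ • (e * S) := by
    have : e * S * (e * S) = (N : ℝ) • (e * S) := by
      rw [mul_assoc, ← mul_assoc S, ← hcS.eq, mul_assoc e S S, hSS, ← mul_assoc, he,
        mul_smul_comm]
    rw [smul_mul_smul_comm, this, smul_smul]
    congr 1
    field_simp
  obtain ⟨m, hm⟩ := exists_nat_trace_of_idempotent _ hidem
  have htr : (e * S).trace = N * m := by
    rw [Matrix.trace_smul, smul_eq_mul] at hm
    rw [← hm]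
    field_simp
  have hsum : (e * S).trace = ∑ l ∈ Finset.range N, (e * ρ (g ^ l)).trace := by
    rw [hS, Finset.mul_sum, Matrix.trace_sum]
  have hconj : ∀ l : ℕ, l.Coprime N → (e * ρ (g ^ l)).trace = (e * ρ g).trace := by
    intro l hl
    obtain ⟨c, hc'⟩ := isConj_iff.1 (isConj_pow_of_coprime g l (hN ▸ hl))
    have h1 : e * ρ g = ρ c * (e * ρ (g ^ l) * ρ c⁻¹) := by
      conv_lhs => rw [← hc']
      rw [map_mul, map_mul, ← mul_assoc, ← mul_assoc, (hc c).eq]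
      simp only [mul_assoc]
    rw [h1, Matrix.trace_mul_comm (ρ c), mul_assoc (e * ρ (g ^ l)), ← map_mul ρ c⁻¹ c,
      inv_mul_cancel, map_one, mul_one]
  rw [← Finset.sum_filter_add_sum_filter_not (Finset.range N) (fun l => l.Coprime N)] at hsum
  rw [Finset.sum_congr rfl fun l hl => hconj l (Finset.mem_filter.1 hl).2, Finset.sum_const,
    htr, nsmul_eq_mul] at hsum
  set c := ((Finset.range N).filter (fun l => l.Coprime N)).card with hcdef
  have hcpos : 0 < c := by
    rw [hcdef, Finset.card_pos]
    refine ⟨1 % N, ?_⟩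
    rw [Finset.mem_filter, Finset.mem_range]
    refine ⟨Nat.mod_lt _ hNpos, ?_⟩
    rw [Nat.Coprime, ← Nat.gcd_rec, Nat.gcd_one_right]
  have hrest : ∑ l ∈ (Finset.range N).filter (fun l => ¬ l.Coprime N),
      (e * ρ (g ^ l)).trace ∈ K := by
    refine sum_mem fun l hl => ih _ ?_ _ rfl
    rw [orderOf_pow, hN]
    have hl' := (Finset.mem_filter.1 hl).2
    refine Nat.div_lt_self hNpos ?_
    rcases Nat.lt_trichotomy (N.gcd l) 1 with h | h | h
    · have := Nat.gcd_pos_of_pos_left l hNpos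
      omega
    · exact absurd (by rw [Nat.Coprime, Nat.gcd_comm, h]) hl'
    · exact h
  have hkey : (e * ρ g).trace = (N * m - ∑ l ∈ (Finset.range N).filter (fun l => ¬ l.Coprime N),
      (e * ρ (g ^ l)).trace) / c := by
    have : (c : ℝ) ≠ 0 := by exact_mod_cast hcpos.ne'
    rw [eq_div_iff this, hsum]
    ring
  rw [hkey]
  exact K.div_mem (K.sub_mem (K.mul_mem (natCast_mem K _) (natCast_mem K _)) hrest)
    (natCast_mem K _)

/-- Let `ρ` be an orthogonal representation of a symmetric group, with matrix entries in `K`, whose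
intertwiners are all symmetric. Then the intertwiners commute with each other, and an intertwiner
with entries in `K` has all its real eigenvalues in `K`: with `e` the projection onto an eigenspace,
`z = ∑ g, tr (e ρ(g)) ρ(g⁻¹)` is a nonzero matrix over `K` satisfying `T z = t z`. -/
theorem eigenvalue_mem_subfield {α ι : Type*} [Fintype α] [DecidableEq α] [Fintype ι]
    [DecidableEq ι] (K : Subfield ℝ) (ρ : Equiv.Perm α →* Matrix ι ι ℝ)
    (hρK : ∀ g i j, ρ g i j ∈ K) (hρT : ∀ g, (ρ g)ᵀ = ρ g⁻¹)
    (hsymm : ∀ Y : Matrix ι ι ℝ, (∀ g, Commute Y (ρ g)) → Yᵀ = Y)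
    (T : Matrix ι ι ℝ) (hTK : ∀ i j, T i j ∈ K) (hT : ∀ g, Commute T (ρ g))
    (t : ℝ) (v : ι → ℝ) (hv : v ≠ 0) (hTv : T *ᵥ v = t • v) : t ∈ K := by
  obtain ⟨e, hee, heT, hTe, he0, hecomm⟩ :=
    exists_spectral_idempotent T (hsymm T hT) t v hv hTv
  have heρ : ∀ g, Commute e (ρ g) := fun g => hecomm _ (hT g)
  have hχ := trace_mem_subfield K ρ e hee heρ
  set z : Matrix ι ι ℝ := ∑ g, (e * ρ g).trace • ρ g⁻¹ with hz
  have hzK : ∀ i j, z i j ∈ K := by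
    intro i j
    rw [hz, Matrix.sum_apply]
    exact sum_mem fun g _ => K.mul_mem (hχ g) (hρK _ _ _)
  have hcommute : ∀ Y Z : Matrix ι ι ℝ, (∀ g, Commute Y (ρ g)) → (∀ g, Commute Z (ρ g)) →
      Y * Z = Z * Y := by
    intro Y Z hY hZ
    have := hsymm (Y * Z) fun g => (hY g).mul_left (hZ g)
    rw [Matrix.transpose_mul, hsymm Y hY, hsymm Z hZ] at this
    exact this.symm
  -- `∑ g, ρ g * X * ρ g⁻¹` is an intertwiner, hence commutes with `e`
  have havg : ∀ X : Matrix ι ι ℝ, ∑ g, e * ρ g * X * (ρ g⁻¹ * (1 - e)) = 0 := by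
    intro X
    have hY : ∀ h, Commute (∑ g, ρ g * X * ρ g⁻¹) (ρ h) := by
      intro h
      rw [Commute, SemiconjBy, Finset.sum_mul, Finset.mul_sum]
      refine (Fintype.sum_equiv (Equiv.mulLeft h) _ _ fun g => ?_).symm
      simp only [Equiv.coe_mulLeft, map_mul, _root_.mul_inv_rev, mul_assoc]
      rw [← map_mul ρ h⁻¹ h, inv_mul_cancel, map_one, mul_one]
    have h1 := hcommute _ e hY heρ
    calc ∑ g, e * ρ g * X * (ρ g⁻¹ * (1 - e))
        = e * (∑ g, ρ g * X * ρ g⁻¹) * (1 - e) := by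
          rw [Finset.mul_sum, Finset.sum_mul]
          simp only [mul_assoc]
      _ = 0 := by
          rw [← h1, mul_assoc, mul_sub, mul_one, hee, sub_self, mul_zero]
  have hz1 : z * (1 - e) = 0 := by
    ext b y
    have h1 : ∀ a, (∑ g, e * ρ g * Matrix.single a b (1 : ℝ) * (ρ g⁻¹ * (1 - e)) :
        Matrix ι ι ℝ) a y = 0 := by
      intro a
      rw [havg]
      rfl
    have h2 := Finset.sum_congr (rfl : (Finset.univ : Finset ι) = Finset.univ) fun a _ => h1 a
    simp only [Finset.sum_const_zero, Matrix.sum_apply] at h2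
    rw [Finset.sum_comm] at h2
    rw [hz, Finset.sum_mul, Matrix.sum_apply, Matrix.zero_apply, ← h2]
    refine Finset.sum_congr rfl fun g _ => ?_
    rw [smul_mul_assoc, Matrix.smul_apply, smul_eq_mul, Matrix.trace, Finset.sum_mul]
    refine Finset.sum_congr rfl fun a _ => ?_
    rw [Matrix.mul_apply (M := e * ρ g * Matrix.single a b 1)]
    rw [Finset.sum_eq_single b]
    · simp
    · intro c _ hc
      rw [Matrix.mul_single_apply_of_ne _ _ _ _ _ hc, zero_mul]
    · simp
  have hze : z = z * e := by
    rw [mul_sub, mul_one, sub_eq_zero] at hz1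
    exact hz1
  have hez : z * e = e * z := by
    rw [hz, Finset.sum_mul, Finset.mul_sum]
    refine Finset.sum_congr rfl fun g _ => ?_
    rw [smul_mul_assoc, mul_smul_comm, (heρ g⁻¹).eq]
  have hTz : T * z = t • z := by
    rw [hze, hez, ← mul_assoc, hTe, smul_mul_assoc]
  have hz0 : z ≠ 0 := by
    intro h0
    have h1 : (e * z).trace = ∑ g, (e * ρ g).trace ^ 2 := by
      rw [hz, Finset.mul_sum, Matrix.trace_sum]
      refine Finset.sum_congr rfl fun g _ => ?_
      rw [mul_smul_comm, Matrix.trace_smul, smul_eq_mul, sq]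
      congr 1
      rw [← hρT, ← Matrix.trace_transpose, Matrix.transpose_mul, Matrix.transpose_transpose, heT,
        (heρ g).eq]
    rw [h0, mul_zero, Matrix.trace_zero] at h1
    have h2 := (Finset.sum_eq_zero_iff_of_nonneg fun g _ => sq_nonneg _).1 h1.symm 1
      (Finset.mem_univ _)
    rw [map_one, mul_one] at h2
    have h3 : e.trace = 0 := by simpa using h2
    -- `e` is symmetric and idempotent, so its trace is the sum of the squares of its entries
    have h4 : e.trace = ∑ i, ∑ j, e i j ^ 2 := by
      conv_lhs => rw [← hee]
      simp only [Matrix.trace, Matrix.diag_apply, Matrix.mul_apply]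
      refine Finset.sum_congr rfl fun i _ => Finset.sum_congr rfl fun j _ => ?_
      rw [sq]
      congr 1
      exact congrFun (congrFun heT i) j
    rw [h3] at h4
    apply he0
    ext i j
    have h5 := (Finset.sum_eq_zero_iff_of_nonneg fun i _ =>
      Finset.sum_nonneg fun j _ => sq_nonneg (e i j)).1 h4.symm i (Finset.mem_univ _)
    have h6 := (Finset.sum_eq_zero_iff_of_nonneg fun j _ => sq_nonneg (e i j)).1 h5 j
      (Finset.mem_univ _)
    simpa using h6
  obtain ⟨i, j, hij⟩ : ∃ i j, z i j ≠ 0 := by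
    by_contra! hcon
    exact hz0 (by ext i j; exact hcon i j)
  have hfin : t = (T * z) i j / z i j := by
    rw [hTz, Matrix.smul_apply, smul_eq_mul]
    field_simp
  rw [hfin, Matrix.mul_apply]
  exact K.div_mem (sum_mem fun l _ => K.mul_mem (hTK _ _) (hzK _ _)) (hzK _ _)

end

/-! ### The edge sign cocycle -/

/-- The sign `±1` recording whether `a < b`; it is antisymmetric on distinct arguments. -/
noncomputable def eps {n : ℕ} (a b : Fin n) : ℝ := if a < b then 1 else -1

theorem eps_mul_self {n : ℕ} (a b : Fin n) : eps a b * eps a b = 1 := by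
  unfold eps; split_ifs <;> norm_num

theorem eps_swap {n : ℕ} {a b : Fin n} (h : a ≠ b) : eps b a = -eps a b := by
  unfold eps
  rcases lt_or_gt_of_ne h with h | h
  · simp [h, h.not_gt]
  · simp [h, h.not_gt]

theorem eps_of_lt {n : ℕ} {a b : Fin n} (h : a < b) : eps a b = 1 := if_pos h

/-- The smaller endpoints of the 2-cycles of an involution `σ`. -/
def starts {n : ℕ} (σ : Equiv.Perm (Fin n)) : Finset (Fin n) :=
  Finset.univ.filter fun i => i < σ i

theorem mem_starts {n : ℕ} {σ : Equiv.Perm (Fin n)} {i : Fin n} : i ∈ starts σ ↔ i < σ i := by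
  simp [starts]

/-- `(-1)` to the number of 2-cycles of `σ` whose endpoints are put out of order by `g`. -/
noncomputable def edgeSign {n : ℕ} (σ g : Equiv.Perm (Fin n)) : ℝ :=
  ∏ i ∈ starts σ, eps (g i) (g (σ i))

theorem edgeSign_mul_self {n : ℕ} (σ g : Equiv.Perm (Fin n)) :
    edgeSign σ g * edgeSign σ g = 1 := by
  rw [edgeSign, ← Finset.prod_mul_distrib]
  exact Finset.prod_eq_one fun i _ => eps_mul_self _ _

theorem edgeSign_one {n : ℕ} (σ : Equiv.Perm (Fin n)) : edgeSign σ 1 = 1 :=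
  Finset.prod_eq_one fun _ hi => eps_of_lt (mem_starts.1 hi)

/-- Conjugation by `g` maps the 2-cycles of `σ` bijectively to those of `σ'`, so a product over
2-cycles may be transported along it. -/
theorem prod_starts_conj {n : ℕ} (σ σ' g : Equiv.Perm (Fin n)) (hσ : ∀ i, σ (σ i) = i)
    (hg : ∀ i, σ' (g i) = g (σ i)) (F : Fin n → ℝ) (hF : ∀ j, F (σ' j) = F j) :
    ∏ i ∈ starts σ, F (g i) = ∏ j ∈ starts σ', F j := by
  have hne : ∀ i, i < σ i → g i ≠ g (σ i) := fun i hi h => hi.ne (g.injective h)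
  refine Finset.prod_bij (fun i _ => if g i < g (σ i) then g i else g (σ i)) ?_ ?_ ?_ ?_
  · intro i hi
    rw [mem_starts] at hi ⊢
    split_ifs with h
    · rwa [hg]
    · rw [hg, hσ]
      exact lt_of_le_of_ne (not_lt.1 h) (hne i hi).symm
  · intro i hi j hj hij
    rw [mem_starts] at hi hj
    split_ifs at hij with h1 h2 h2
    · exact g.injective hij
    · have := g.injective hij
      rw [this, hσ] at hi
      exact absurd hi hj.not_gt
    · have := g.injective hij
      rw [← this, hσ] at hj
      exact absurd hj hi.not_gt
    · exact σ.injective (g.injective hij)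
  · intro j hj
    rw [mem_starts] at hj
    obtain ⟨i, rfl⟩ := g.surjective j
    rw [hg] at hj
    rcases lt_or_gt_of_ne (fun h : i = σ i => hj.ne (congrArg g h)) with h | h
    · exact ⟨i, mem_starts.2 h, if_pos hj⟩
    · refine ⟨σ i, mem_starts.2 (by rwa [hσ]), ?_⟩
      rw [hσ, if_neg hj.not_gt]
  · intro i _
    split_ifs
    · rfl
    · rw [← hg, hF]

/-- The cocycle property of `edgeSign`. -/
theorem edgeSign_mul {n : ℕ} (σ σ' g h : Equiv.Perm (Fin n)) (hσ : ∀ i, σ (σ i) = i)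
    (hg : ∀ i, σ' (g i) = g (σ i)) :
    edgeSign σ (h * g) = edgeSign σ' h * edgeSign σ g := by
  have hσ' : ∀ j, σ' (σ' j) = j := by
    intro j
    obtain ⟨i, rfl⟩ := g.surjective j
    rw [hg, hg, hσ]
  have key := prod_starts_conj σ σ' g hσ hg
    (fun j => eps (h j) (h (σ' j)) * eps j (σ' j)) (by
      intro j
      rw [hσ']
      by_cases hj : j = σ' j
      · rw [← hj]
      · rw [eps_swap hj, eps_swap (fun H => hj (h.injective H))]
        ring)
  have h1 : ∏ j ∈ starts σ', eps (h j) (h (σ' j)) * eps j (σ' j) = edgeSign σ' h :=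
    Finset.prod_congr rfl fun j hj => by rw [eps_of_lt (mem_starts.1 hj), mul_one]
  rw [h1, Finset.prod_mul_distrib] at key
  simp only [hg] at key
  rw [← key, mul_assoc]
  change _ = _ * (edgeSign σ g * edgeSign σ g)
  rw [edgeSign_mul_self, mul_one]
  rfl

/-- For `h` commuting with `σ`, `edgeSign σ h` may be computed from any orientation `ω` of the
2-cycles of `σ`. -/
theorem edgeSign_eq_prod_orientation {n : ℕ} (σ h : Equiv.Perm (Fin n)) (hσ : ∀ i, σ (σ i) = i)
    (hh : ∀ i, σ (h i) = h (σ i)) (ω : Fin n → ℝ) (hω : ∀ i, σ i ≠ i → ω (σ i) = -ω i)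
    (hω1 : ∀ i, ω i * ω i = 1) :
    edgeSign σ h = ∏ i ∈ starts σ, ω (h i) * ω i := by
  have key := prod_starts_conj σ σ h hσ hh
    (fun j => if σ j = j then 1 else eps j (σ j) * ω j) (by
      intro j
      rw [hσ]
      by_cases hj : σ j = j
      · rw [if_pos hj, if_pos hj.symm]
      · rw [if_neg hj, if_neg (Ne.symm hj), hω j hj, eps_swap (Ne.symm hj)]
        ring)
  have h1 : ∏ j ∈ starts σ, (if σ j = j then 1 else eps j (σ j) * ω j) = ∏ j ∈ starts σ, ω j := by
    refine Finset.prod_congr rfl fun j hj => ?_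
    have hj := mem_starts.1 hj
    rw [if_neg hj.ne', eps_of_lt hj, one_mul]
  have h2 : ∏ i ∈ starts σ, (if σ (h i) = h i then 1 else eps (h i) (σ (h i)) * ω (h i)) =
      edgeSign σ h * ∏ i ∈ starts σ, ω (h i) := by
    rw [edgeSign, ← Finset.prod_mul_distrib]
    refine Finset.prod_congr rfl fun j hj => ?_
    have hj := mem_starts.1 hj
    rw [hh, if_neg (fun H => hj.ne' (h.injective H))]
  have h3 : (∏ i ∈ starts σ, ω (h i)) * ∏ i ∈ starts σ, ω (h i) = 1 := by
    rw [← Finset.prod_mul_distrib]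
    exact Finset.prod_eq_one fun i _ => hω1 _
  rw [h1, h2] at key
  rw [Finset.prod_mul_distrib, ← key]
  linear_combination (-edgeSign σ h) * h3

/-- For an involution `g` commuting with `σ`, `edgeSign σ g` counts only the 2-cycles of `σ` whose
endpoints are swapped by `g`: the other 2-cycles are fixed pointwise or exchanged in pairs, and the
signs of such a pair cancel. -/
theorem edgeSign_of_involution {n : ℕ} (σ g : Equiv.Perm (Fin n)) (hσ : ∀ i, σ (σ i) = i)
    (hg : ∀ i, g (g i) = i) (hh : ∀ i, σ (g i) = g (σ i)) :
    edgeSign σ g = ∏ i ∈ starts σ, if g i = σ i then -1 else 1 := by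
  -- Orient a 2-cycle by comparing the smallest elements of the two `g`-orbits it meets.
  rw [edgeSign_eq_prod_orientation σ g hσ hh
    (fun i => if g i = σ i then eps i (σ i) else eps (min i (g i)) (min (σ i) (g (σ i))))]
  · refine Finset.prod_congr rfl fun i hi => ?_
    have hi := mem_starts.1 hi
    by_cases h : g i = σ i
    · simp only [h, hσ, ← hh, if_true]
      rw [eps_swap hi.ne, eps_of_lt hi]
      norm_num
    · have h' : g (g i) ≠ σ (g i) := by
        rw [hh]
        exact fun H => h (g.injective H)
      simp only [h, h', if_false]
      rw [hg, hh, hg, min_comm (g i), min_comm (g (σ i)), eps_mul_self]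
  · intro i hi
    by_cases h : g i = σ i
    · have h' : g (σ i) = σ (σ i) := by rw [← hh, h]
      simp only [h, h', if_true]
      rw [hσ, eps_swap (Ne.symm hi)]
    · have h' : g (σ i) ≠ σ (σ i) := by
        rw [← hh]
        exact fun H => h (σ.injective H)
      simp only [h, h', if_false]
      rw [hσ]
      refine eps_swap ?_
      have e1 : i ≠ g (σ i) := fun H => h (by conv_lhs => rw [H, hg])
      have e2 : g i ≠ g (σ i) := fun H => hi (g.injective H).symm
      rcases min_choice i (g i) with H1 | H1 <;> rcases min_choice (σ i) (g (σ i)) with H2 | H2 <;>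
        rw [H1, H2]
      · exact Ne.symm hi
      · exact e1
      · exact h
      · exact e2
  · intro i
    split_ifs <;> exact eps_mul_self _ _

/-! ### Pairs of involutions -/

/-- `σ` inverts `σ * τ`. -/
theorem involution_mul_zpow {n : ℕ} (σ τ : Equiv.Perm (Fin n)) (hσ : ∀ i, σ (σ i) = i)
    (hτ : ∀ i, τ (τ i) = i) (k : ℤ) (i : Fin n) :
    σ (((σ * τ) ^ k) i) = ((σ * τ) ^ (-k)) (σ i) := by
  have hσ' : σ⁻¹ = σ := Equiv.ext fun i => by rw [Equiv.Perm.inv_eq_iff_eq, hσ]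
  have hτ' : τ⁻¹ = τ := Equiv.ext fun i => by rw [Equiv.Perm.inv_eq_iff_eq, hτ]
  have h1 : σ * (σ * τ) * σ⁻¹ = (σ * τ)⁻¹ := by
    rw [mul_inv_rev, hτ']
    nth_rewrite 1 [← hσ']
    group
  have h2 : σ * (σ * τ) ^ k * σ⁻¹ = (σ * τ) ^ (-k) := by
    rw [← conj_zpow, h1, inv_zpow, zpow_neg]
  rw [← h2, hσ']
  simp [hσ]

theorem zpow_apply_eq_iff {n : ℕ} (p : Equiv.Perm (Fin n)) (x : Fin n) (a b : ℤ) :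
    (p ^ a) x = (p ^ b) x ↔ (MulAction.period p x : ℤ) ∣ a - b := by
  rw [← MulAction.zpow_smul_eq_iff_period_dvd, Equiv.Perm.smul_def, sub_eq_neg_add, zpow_add,
    Equiv.Perm.mul_apply, zpow_neg, Equiv.Perm.inv_eq_iff_eq]

/-- If `y` and `σ y` are antipodal on an even cycle of `σ * τ`, the half turn `g` of that cycle
commutes with `σ` and `τ`; it reverses the single 2-cycle `{y, σ y}` of `σ` and no 2-cycle of `τ`.
(In graph terms: reflecting an alternating path with an odd number of edges.) -/
theorem exists_reflection {n : ℕ} (σ τ : Equiv.Perm (Fin n)) (hσ : ∀ i, σ (σ i) = i)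
    (hτ : ∀ i, τ (τ i) = i) (y : Fin n) (L : ℕ) (hL : 0 < L)
    (hper : MulAction.period (σ * τ) y = 2 * L) (hy : σ y = ((σ * τ) ^ (L : ℤ)) y) :
    ∃ g : Equiv.Perm (Fin n), (∀ i, g (σ i) = σ (g i)) ∧ (∀ i, g (τ i) = τ (g i)) ∧
      edgeSign σ g * edgeSign τ g = -1 := by
  classical
  set p := σ * τ with hp
  have hpi : ∀ i, σ (τ i) = p i := fun i => rfl
  have hτp : ∀ i, τ i = σ (p i) := fun i => by rw [← hpi, hσ]
  have hzp : ∀ (k : ℤ) i, σ ((p ^ k) i) = (p ^ (-k)) (σ i) := involution_mul_zpow σ τ hσ hτ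
  have heq := zpow_apply_eq_iff p y
  rw [hper] at heq
  have hσcyc : ∀ k : ℤ, σ ((p ^ k) y) = (p ^ (L - k)) y := fun k => by
    rw [hzp, hy, ← Equiv.Perm.mul_apply, ← zpow_add]
    congr 2
    ring
  have hτcyc : ∀ k : ℤ, τ ((p ^ k) y) = (p ^ (L - k - 1)) y := fun k => by
    rw [hτp]
    have : p ((p ^ k) y) = (p ^ (k + 1)) y := by
      rw [add_comm, zpow_add, zpow_one]
      rfl
    rw [this, hσcyc]
    congr 2
    ring
  have hsσ : ∀ i, p.SameCycle y i → p.SameCycle y (σ i) := by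
    rintro i ⟨k, rfl⟩
    exact ⟨_, (hσcyc k).symm⟩
  have hsτ : ∀ i, p.SameCycle y i → p.SameCycle y (τ i) := by
    rintro i ⟨k, rfl⟩
    exact ⟨_, (hτcyc k).symm⟩
  have hsσ' : ∀ i, p.SameCycle y (σ i) ↔ p.SameCycle y i := fun i =>
    ⟨fun h => by simpa [hσ] using hsσ _ h, hsσ i⟩
  have hsτ' : ∀ i, p.SameCycle y (τ i) ↔ p.SameCycle y i := fun i =>
    ⟨fun h => by simpa [hτ] using hsτ _ h, hsτ i⟩
  let g0 : Fin n → Fin n := fun i => if p.SameCycle y i then (p ^ (L : ℤ)) i else i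
  have hg0 : ∀ k : ℤ, g0 ((p ^ k) y) = (p ^ (L + k)) y := fun k => by
    have : p.SameCycle y ((p ^ k) y) := ⟨k, rfl⟩
    simp only [g0, if_pos this]
    rw [← Equiv.Perm.mul_apply, ← zpow_add]
  have hg0' : ∀ i, ¬ p.SameCycle y i → g0 i = i := fun i hi => if_neg hi
  have hinv : Function.Involutive g0 := by
    intro i
    by_cases hi : p.SameCycle y i
    · obtain ⟨k, rfl⟩ := hi
      rw [hg0, hg0, heq]
      exact ⟨1, by push_cast; ring⟩
    · rw [hg0' i hi, hg0' i hi]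
  have hc1 : ∀ i, σ (g0 i) = g0 (σ i) := by
    intro i
    by_cases hi : p.SameCycle y i
    · obtain ⟨k, rfl⟩ := hi
      rw [hg0, hσcyc, hσcyc, hg0, heq]
      exact ⟨-1, by push_cast; ring⟩
    · rw [hg0' i hi, hg0' _ (mt (hsσ' i).1 hi)]
  have hc2 : ∀ i, τ (g0 i) = g0 (τ i) := by
    intro i
    by_cases hi : p.SameCycle y i
    · obtain ⟨k, rfl⟩ := hi
      rw [hg0, hτcyc, hτcyc, hg0, heq]
      exact ⟨-1, by push_cast; ring⟩
    · rw [hg0' i hi, hg0' _ (mt (hsτ' i).1 hi)]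
  refine ⟨hinv.toPerm g0, fun i => (hc1 i).symm, fun i => (hc2 i).symm, ?_⟩
  rw [edgeSign_of_involution σ (hinv.toPerm g0) hσ hinv hc1,
    edgeSign_of_involution τ (hinv.toPerm g0) hτ hinv hc2]
  change (∏ i ∈ starts σ, if g0 i = σ i then (-1 : ℝ) else 1) *
    (∏ i ∈ starts τ, if g0 i = τ i then (-1 : ℝ) else 1) = -1
  have hτ1 : ∀ i ∈ starts τ, (if g0 i = τ i then (-1 : ℝ) else 1) = 1 := by
    intro i hi
    rw [if_neg]
    intro h
    have hi' := mem_starts.1 hi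
    by_cases hs : p.SameCycle y i
    · obtain ⟨k, rfl⟩ := hs
      rw [hg0, hτcyc, heq] at h
      obtain ⟨c, hc⟩ := h
      push_cast at hc
      have h2 : 2 * (k - L * c) = -1 := by linarith
      omega
    · rw [hg0' i hs] at h
      exact hi'.ne h
  have hτprod := Finset.prod_eq_one hτ1
  rw [hτprod, mul_one]
  have hyne : σ y ≠ y := by
    intro h
    rw [hy] at h
    have := (heq L 0).1 (by simpa using h)
    obtain ⟨c, hc⟩ := this
    push_cast at hc
    have hL' : (L : ℤ) ≠ 0 := by exact_mod_cast hL.ne'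
    have h1 : (L : ℤ) * (2 * c - 1) = 0 := by linarith
    rcases mul_eq_zero.1 h1 with h1 | h1
    · exact hL' h1
    · omega
  have hgy : g0 y = σ y := by
    have := hg0 0
    simpa [hy] using this
  have hchar : ∀ i ∈ starts σ, g0 i = σ i → i = y ∨ i = σ y := by
    intro i hi h
    have hi' := mem_starts.1 hi
    by_cases hs : p.SameCycle y i
    · obtain ⟨k, rfl⟩ := hs
      rw [hg0, hσcyc, heq] at h
      obtain ⟨c, hc⟩ := h
      push_cast at hc
      have hk : k = L * c := by linarith
      rcases Int.even_or_odd' c with ⟨d, hd | hd⟩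
      · left
        have := (heq k 0).2 ⟨d, by rw [hk, hd]; push_cast; ring⟩
        simpa using this
      · right
        rw [hy]
        exact (heq k L).2 ⟨d, by rw [hk, hd]; push_cast; ring⟩
    · rw [hg0' i hs] at h
      exact absurd h hi'.ne
  rcases lt_or_gt_of_ne hyne with hlt | hlt
  · rw [Finset.prod_eq_single (σ y)]
    · rw [if_pos (by rw [← hc1, hgy])]
    · intro i hi hne
      rw [if_neg]
      intro h
      rcases hchar i hi h with rfl | h
      · exact absurd (mem_starts.1 hi) hlt.not_gt
      · exact hne h
    · intro h
      exact absurd (mem_starts.2 (by rwa [hσ])) h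
  · rw [Finset.prod_eq_single y]
    · rw [if_pos hgy]
    · intro i hi hne
      rw [if_neg]
      intro h
      rcases hchar i hi h with h | rfl
      · exact hne h
      · have := mem_starts.1 hi
        rw [hσ] at this
        exact absurd this hlt.not_gt
    · intro h
      exact absurd (mem_starts.2 hlt) h

/-- If every cycle of `σ * τ` preserved by `σ` has odd length, some `g` exchanges `σ` and `τ` under
conjugation, with total sign `1`. -/
theorem exists_exchange {n : ℕ} (σ τ : Equiv.Perm (Fin n)) (hσ : ∀ i, σ (σ i) = i)
    (hτ : ∀ i, τ (τ i) = i)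
    (hodd : ∀ x, (σ * τ).SameCycle x (σ x) → Odd (MulAction.period (σ * τ) x)) :
    ∃ g : Equiv.Perm (Fin n), (∀ i, g (σ i) = τ (g i)) ∧ (∀ i, g (τ i) = σ (g i)) ∧
      edgeSign σ g * edgeSign τ g = 1 := by
  classical
  set p := σ * τ with hp
  have hpi : ∀ i, σ (τ i) = p i := fun i => rfl
  have hτp : ∀ i, τ i = σ (p i) := fun i => by rw [← hpi, hσ]
  have hzp : ∀ (k : ℤ) i, σ ((p ^ k) i) = (p ^ (-k)) (σ i) := involution_mul_zpow σ τ hσ hτ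
  -- `m` labels the cycles of `p`
  obtain ⟨m, hm⟩ : ∃ m : Fin n → Fin n, ∀ x y, m x = m y ↔ p.SameCycle x y := by
    refine ⟨fun x => (Quotient.mk (Equiv.Perm.SameCycle.setoid p) x).out, fun x y => ?_⟩
    rw [Quotient.out_inj, Quotient.eq]
    rfl
  have hmz : ∀ (k : ℤ) x, m ((p ^ k) x) = m x := fun k x =>
    (hm _ _).2 (Equiv.Perm.SameCycle.symm ⟨k, rfl⟩)
  have hmp : ∀ x, m (p x) = m x := fun x => by simpa using hmz 1 x
  have hmσz : ∀ (k : ℤ) x, m (σ ((p ^ k) x)) = m (σ x) := fun k x => by rw [hzp, hmz]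
  have hmτ : ∀ x, m (τ x) = m (σ x) := fun x => by
    rw [hτp]
    simpa using hmσz 1 x
  -- a square root `p ^ a` of `p` on the cycles preserved by `σ`
  obtain ⟨a, ha⟩ : ∃ a : ℤ, ∀ x, m x = m (σ x) → (MulAction.period p x : ℤ) ∣ 2 * a - 1 := by
    have hM : Odd (∏ x ∈ Finset.univ.filter (fun x : Fin n => Odd (MulAction.period p x)),
        MulAction.period p x) :=
      Finset.prod_induction _ Odd (fun _ _ => Odd.mul) odd_one
        fun x hx => (Finset.mem_filter.1 hx).2
    obtain ⟨b, hb⟩ := hM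
    refine ⟨b + 1, fun x hx => ?_⟩
    have hmem : x ∈ Finset.univ.filter (fun x : Fin n => Odd (MulAction.period p x)) :=
      Finset.mem_filter.2 ⟨Finset.mem_univ x, hodd x ((hm _ _).1 hx)⟩
    have h1 := Finset.dvd_prod_of_mem (fun x : Fin n => MulAction.period p x) hmem
    rw [hb] at h1
    have h2 : (MulAction.period p x : ℤ) ∣ ((2 * b + 1 : ℕ) : ℤ) := by exact_mod_cast h1
    convert h2 using 1
    push_cast
    ring
  have hroot : ∀ x, m x = m (σ x) → ∀ k l : ℤ, k - l = 2 * a - 1 → (p ^ k) x = (p ^ l) x :=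
    fun x hx k l hkl => (zpow_apply_eq_iff p x k l).2 (by rw [hkl]; exact ha x hx)
  let f : Fin n → Fin n := fun y =>
    if m y < m (σ y) then τ y else if m (σ y) < m y then σ y else σ ((p ^ a) y)
  have f1 : ∀ y, m y < m (σ y) → f y = τ y := fun y h => if_pos h
  have f2 : ∀ y, m (σ y) < m y → f y = σ y := fun y h => by
    simp only [f, if_neg h.not_gt, if_pos h]
  have f3 : ∀ y, m y = m (σ y) → f y = σ ((p ^ a) y) := fun y h => by
    simp only [f, ← h, lt_irrefl, if_false]
  have hpσ : ∀ y, p (σ y) = σ ((p ^ (-1 : ℤ)) y) := fun y => by rw [hzp]; simp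
  have hff1 : ∀ y, m y < m (σ y) → f (f y) = p y := fun y h => by
    rw [f1 y h, f2, hpi]
    rwa [hpi, hmp, hmτ]
  have hff2 : ∀ y, m (σ y) < m y → f (f y) = (p ^ (-1 : ℤ)) y := fun y h => by
    rw [f2 y h, f1]
    · rw [hτp, hpσ, hσ]
    · rwa [hσ]
  have hff3 : ∀ y, m y = m (σ y) → f (f y) = y := fun y h => by
    rw [f3 y h, f3]
    · rw [hzp, hσ, ← Equiv.Perm.mul_apply, ← zpow_add, neg_add_cancel, zpow_zero]
      rfl
    · rw [hσ, hmz, hmσz, h]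
  have hmff : ∀ y, m (f (f y)) = m y := fun y => by
    rcases lt_trichotomy (m y) (m (σ y)) with h | h | h
    · rw [hff1 y h, hmp]
    · rw [hff3 y h]
    · rw [hff2 y h, hmz]
  have hfσ : ∀ y, f (σ y) = τ (f y) := fun y => by
    rcases lt_trichotomy (m y) (m (σ y)) with h | h | h
    · rw [f1 y h, f2 (σ y) (by rwa [hσ]), hσ, hτ]
    · rw [f3 y h, f3 (σ y) (by rw [hσ, h]), hzp, hσ, hτp, hpσ, hσ, ← Equiv.Perm.mul_apply,
        ← zpow_add]
      exact (hroot y h _ _ (by ring)).symm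
    · rw [f2 y h, f1 (σ y) (by rwa [hσ])]
  have hfτ : ∀ y, f (τ y) = σ (f y) := fun y => by
    rcases lt_trichotomy (m y) (m (σ y)) with h | h | h
    · rw [f1 y h, f2 (τ y) (by rwa [hpi, hmp, hmτ])]
    · rw [f3 y h, f3 (τ y) (by rw [hpi, hmp, hmτ, h]), hzp, hpi, hσ]
      have : (p ^ (-a)) (p y) = (p ^ (-a + 1)) y := by
        rw [zpow_add, zpow_one]
        rfl
      rw [this]
      exact (hroot y h _ _ (by ring)).symm
    · rw [f2 y h, f1 (τ y) (by rwa [hpi, hmp, hmτ]), hσ, hτ]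
  have hffσ : ∀ y, f (f (σ y)) = σ (f (f y)) := fun y => by rw [hfσ, hfτ]
  have hinj : Function.Injective f := by
    have : Function.Injective (f ∘ f) := by
      intro x y hxy
      simp only [Function.comp_apply] at hxy
      have e1 : m x = m y := by rw [← hmff x, hxy, hmff]
      have e2 : m (σ x) = m (σ y) := by rw [← hmff (σ x), hffσ, hxy, ← hffσ, hmff]
      rcases lt_trichotomy (m x) (m (σ x)) with h | h | h
      · rw [hff1 x h, hff1 y (by rwa [← e1, ← e2])] at hxy
        exact p.injective hxy
      · rwa [hff3 x h, hff3 y (by rwa [← e1, ← e2])] at hxy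
      · rw [hff2 x h, hff2 y (by rwa [← e1, ← e2])] at hxy
        exact (p ^ (-1 : ℤ)).injective hxy
    exact this.of_comp
  let g : Equiv.Perm (Fin n) := Equiv.ofBijective f (Finite.injective_iff_bijective.1 hinj)
  have hg : ∀ i, g i = f i := fun i => rfl
  refine ⟨g, hfσ, hfτ, ?_⟩
  rw [mul_comm, ← edgeSign_mul σ τ g g hσ fun i => (hfσ i).symm]
  -- orient the 2-cycles of `σ` joining two different cycles of `p` by the labels of these cycles
  rw [edgeSign_eq_prod_orientation σ (g * g) hσ (fun i => (hffσ i).symm)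
    (fun i => if m i < m (σ i) then 1 else if m (σ i) < m i then -1 else eps i (σ i))]
  · refine Finset.prod_eq_one fun i _ => ?_
    have e1 : (g * g) i = f (f i) := rfl
    have e2 : m (σ (f (f i))) = m (σ i) := by rw [← hffσ, hmff]
    rw [e1, e2, hmff]
    rcases lt_trichotomy (m i) (m (σ i)) with h | h | h
    · simp [h]
    · rw [hff3 i h]
      simp [h, eps_mul_self]
    · simp [h, h.not_gt]
  · intro i hi
    rw [hσ]
    rcases lt_trichotomy (m i) (m (σ i)) with h | h | h
    · simp [h, h.not_gt]
    · simp [h, eps_swap (Ne.symm hi)]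
    · simp [h, h.not_gt]
  · intro i
    split_ifs
    · norm_num
    · norm_num
    · exact eps_mul_self _ _

/-- The combinatorial heart of multiplicity-freeness: two involutions are either exchanged by a
permutation with total sign `1`, or both fixed by a permutation with total sign `-1`. -/
theorem exists_exchange_or_reflection {n : ℕ} (σ τ : Equiv.Perm (Fin n))
    (hσ : ∀ i, σ (σ i) = i) (hτ : ∀ i, τ (τ i) = i) :
    (∃ g : Equiv.Perm (Fin n), (∀ i, g (σ i) = τ (g i)) ∧ (∀ i, g (τ i) = σ (g i)) ∧
      edgeSign σ g * edgeSign τ g = 1) ∨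
    (∃ g : Equiv.Perm (Fin n), (∀ i, g (σ i) = σ (g i)) ∧ (∀ i, g (τ i) = τ (g i)) ∧
      edgeSign σ g * edgeSign τ g = -1) := by
  by_cases hodd : ∀ x, (σ * τ).SameCycle x (σ x) → Odd (MulAction.period (σ * τ) x)
  · exact Or.inl (exists_exchange σ τ hσ hτ hodd)
  right
  push Not at hodd
  obtain ⟨x, ⟨c, hc⟩, hx⟩ := hodd
  rw [Nat.not_odd_iff_even] at hx
  obtain ⟨L, hL⟩ := hx
  have hLpos : 0 < L := by
    have : 0 < MulAction.period (σ * τ) x :=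
      MulAction.period_pos_of_orderOf_pos (orderOf_pos _) x
    omega
  have hzp := involution_mul_zpow σ τ hσ hτ
  have hτp : ∀ i, τ i = σ ((σ * τ) i) := fun i => (hσ _).symm
  have hper : ∀ k : ℤ, MulAction.period (σ * τ) (((σ * τ) ^ k) x) = 2 * L := by
    intro k
    have h1 : ∀ j : ℕ, MulAction.period (σ * τ) (((σ * τ) ^ k) x) ∣ j ↔
        MulAction.period (σ * τ) x ∣ j := by
      intro j
      rw [← MulAction.pow_smul_eq_iff_period_dvd, ← MulAction.pow_smul_eq_iff_period_dvd,
        Equiv.Perm.smul_def, Equiv.Perm.smul_def, ← Equiv.Perm.mul_apply,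
        ((Commute.refl (σ * τ)).pow_left j |>.zpow_right k).eq, Equiv.Perm.mul_apply,
        EmbeddingLike.apply_eq_iff_eq]
    rw [Nat.dvd_right_iff_eq.1 h1, hL, two_mul]
  have hshift : ∀ k l : ℤ, ((σ * τ) ^ l) x = ((σ * τ) ^ (l - k)) (((σ * τ) ^ k) x) := by
    intro k l
    rw [← Equiv.Perm.mul_apply, ← zpow_add, sub_add_cancel]
  have hσk : ∀ k : ℤ, σ (((σ * τ) ^ k) x) = ((σ * τ) ^ (c - k)) x := by
    intro k
    rw [hzp, ← hc, ← Equiv.Perm.mul_apply, ← zpow_add, neg_add_eq_sub]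
  have hτk : ∀ k : ℤ, τ (((σ * τ) ^ k) x) = ((σ * τ) ^ (c - (1 + k))) x := by
    intro k
    rw [hτp, ← hσk, zpow_add, zpow_one, Equiv.Perm.mul_apply (σ * τ)]
  rcases Int.even_or_odd' (c - L) with ⟨k, hk | hk⟩
  · refine exists_reflection σ τ hσ hτ (((σ * τ) ^ k) x) L hLpos (hper k) ?_
    rw [hσk, hshift k]
    congr 2
    linarith
  · have hinv : τ * σ = (σ * τ)⁻¹ := by
      rw [eq_inv_iff_mul_eq_one]
      ext i
      simp [hσ, hτ]
    obtain ⟨g, h1, h2, h3⟩ := exists_reflection τ σ hτ hσ (((σ * τ) ^ k) x) L hLpos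
      (by rw [hinv, MulAction.period_inv, hper]) (by
        rw [hτk, hshift k, hinv, inv_zpow, ← zpow_neg, zpow_apply_eq_iff, hper]
        exact ⟨1, by push_cast; linarith⟩)
    exact ⟨g, h2, h1, by rw [mul_comm, h3]⟩

/-! ### The signed representation on involutions -/

/-- The involutions of `Fin n` (the identity included); they encode the matchings of `Fin n`. -/
abbrev Invol (n : ℕ) : Type := {σ : Equiv.Perm (Fin n) // ∀ i, σ (σ i) = i}

/-- The conjugation action of permutations on involutions. -/
def conjInvol {n : ℕ} (g : Equiv.Perm (Fin n)) (σ : Invol n) : Invol n :=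
  ⟨g * σ.1 * g⁻¹, fun i => by simp [σ.2]⟩

theorem conjInvol_apply {n : ℕ} (g : Equiv.Perm (Fin n)) (σ : Invol n) (i : Fin n) :
    (conjInvol g σ).1 (g i) = g (σ.1 i) := by
  simp [conjInvol]

theorem conjInvol_mul {n : ℕ} (g h : Equiv.Perm (Fin n)) (σ : Invol n) :
    conjInvol (g * h) σ = conjInvol g (conjInvol h σ) := by
  apply Subtype.ext
  simp [conjInvol, mul_assoc]

theorem conjInvol_one {n : ℕ} (σ : Invol n) : conjInvol 1 σ = σ := by
  apply Subtype.ext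
  simp [conjInvol]

theorem conjInvol_eq_of {n : ℕ} (g : Equiv.Perm (Fin n)) (σ τ : Invol n)
    (h : ∀ i, g (σ.1 i) = τ.1 (g i)) : conjInvol g σ = τ := by
  apply Subtype.ext
  ext i : 1
  obtain ⟨j, rfl⟩ := g.surjective i
  rw [conjInvol_apply, h]

/-- `conjInvol g` as a bijection. -/
def conjInvolEquiv {n : ℕ} (g : Equiv.Perm (Fin n)) : Invol n ≃ Invol n where
  toFun := conjInvol g
  invFun := conjInvol g⁻¹
  left_inv σ := by rw [← conjInvol_mul, inv_mul_cancel, conjInvol_one]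
  right_inv σ := by rw [← conjInvol_mul, mul_inv_cancel, conjInvol_one]

theorem edgeSign_conjInvol {n : ℕ} (g h : Equiv.Perm (Fin n)) (σ : Invol n) :
    edgeSign σ.1 (h * g) = edgeSign (conjInvol g σ).1 h * edgeSign σ.1 g :=
  edgeSign_mul σ.1 _ g h σ.2 (conjInvol_apply g σ)

/-- The signed permutation representation on involutions: `g` sends the basis vector of `σ` to
`edgeSign σ g` times that of `g σ g⁻¹`. It contains every irreducible representation of the
symmetric group exactly once. -/
noncomputable def involRep (n : ℕ) : Equiv.Perm (Fin n) →* Matrix (Invol n) (Invol n) ℝ where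
  toFun g := Matrix.of fun a b => if a = conjInvol g b then edgeSign b.1 g else 0
  map_one' := by
    ext a b
    simp [conjInvol_one, edgeSign_one, Matrix.one_apply]
  map_mul' g h := by
    ext a b
    rw [Matrix.mul_apply, Finset.sum_eq_single (conjInvol h b)]
    · simp only [Matrix.of_apply, if_true, conjInvol_mul, edgeSign_conjInvol h g b]
      split_ifs <;> simp
    · intro c _ hc
      simp [hc]
    · simp

theorem involRep_apply {n : ℕ} (g : Equiv.Perm (Fin n)) (a b : Invol n) :
    involRep n g a b = if a = conjInvol g b then edgeSign b.1 g else 0 := rfl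

theorem involRep_transpose {n : ℕ} (g : Equiv.Perm (Fin n)) :
    (involRep n g).transpose = involRep n g⁻¹ := by
  ext a b
  rw [Matrix.transpose_apply, involRep_apply, involRep_apply]
  by_cases h : b = conjInvol g a
  · have h' : a = conjInvol g⁻¹ b := by
      rw [h, ← conjInvol_mul, inv_mul_cancel, conjInvol_one]
    rw [if_pos h, if_pos h']
    have h1 := edgeSign_conjInvol g g⁻¹ a
    rw [inv_mul_cancel, edgeSign_one, ← h] at h1
    have h2 := edgeSign_mul_self a.1 g
    linear_combination (edgeSign a.1 g) * h1 + edgeSign b.1 g⁻¹ * h2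
  · have h' : a ≠ conjInvol g⁻¹ b := by
      intro h'
      rw [h', ← conjInvol_mul, mul_inv_cancel, conjInvol_one] at h
      exact h rfl
    rw [if_neg h, if_neg h']

theorem commute_involRep_iff {n : ℕ} (Y : Matrix (Invol n) (Invol n) ℝ)
    (g : Equiv.Perm (Fin n)) : Commute Y (involRep n g) ↔
      ∀ a b : Invol n, Y (conjInvol g a) (conjInvol g b) * edgeSign b.1 g =
        edgeSign a.1 g * Y a b := by
  have h1 : ∀ c b, (Y * involRep n g) c b = Y c (conjInvol g b) * edgeSign b.1 g := by
    intro c b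
    rw [Matrix.mul_apply, Finset.sum_eq_single (conjInvol g b)]
    · simp [involRep_apply]
    · intro d _ hd
      simp [involRep_apply, hd]
    · simp
  have h2 : ∀ a b, (involRep n g * Y) (conjInvol g a) b = edgeSign a.1 g * Y a b := by
    intro a b
    rw [Matrix.mul_apply, Finset.sum_eq_single a]
    · simp [involRep_apply]
    · intro d _ hd
      have : conjInvol g a ≠ conjInvol g d := fun h => hd ((conjInvolEquiv g).injective h).symm
      simp [involRep_apply, this]
    · simp
  constructor
  · intro h a b
    rw [← h1, ← h2, h.eq]
  · intro h
    ext c b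
    obtain ⟨a, rfl⟩ := (conjInvolEquiv g).surjective c
    change (Y * involRep n g) (conjInvol g a) b = (involRep n g * Y) (conjInvol g a) b
    rw [h1, h2, h]

/-- All intertwiners of `involRep` are symmetric; in particular they commute with each other. -/
theorem transpose_eq_of_commute_involRep {n : ℕ} (Y : Matrix (Invol n) (Invol n) ℝ)
    (hY : ∀ g, Commute Y (involRep n g)) : Y.transpose = Y := by
  ext a b
  rw [Matrix.transpose_apply]
  rcases exists_exchange_or_reflection a.1 b.1 a.2 b.2 with ⟨g, h1, h2, h3⟩ | ⟨g, h1, h2, h3⟩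
  · have h := (commute_involRep_iff Y g).1 (hY g) a b
    rw [conjInvol_eq_of g a b h1, conjInvol_eq_of g b a h2] at h
    have e := edgeSign_mul_self a.1 g
    linear_combination edgeSign a.1 g * h + (- Y b a) * h3 + Y a b * e
  · have h := (commute_involRep_iff Y g).1 (hY g) a b
    have h' := (commute_involRep_iff Y g).1 (hY g) b a
    rw [conjInvol_eq_of g a a h1, conjInvol_eq_of g b b h2] at h h'
    have ea := edgeSign_mul_self a.1 g
    have e0 : Y a b = 0 := by
      linear_combination (-(1/2 : ℝ)) * edgeSign a.1 g * h + (1/2 : ℝ) * Y a b * h3 -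
        (1/2 : ℝ) * Y a b * ea
    have e0' : Y b a = 0 := by
      linear_combination ((1/2 : ℝ)) * edgeSign a.1 g * h' + (1/2 : ℝ) * Y b a * h3 -
        (1/2 : ℝ) * Y b a * ea
    rw [e0, e0']

theorem card_starts_conjInvol {n : ℕ} (g : Equiv.Perm (Fin n)) (σ : Invol n) :
    (starts (conjInvol g σ).1).card = (starts σ.1).card := by
  have := prod_starts_conj σ.1 (conjInvol g σ).1 g σ.2 (conjInvol_apply g σ) (fun _ => 2)
    (fun _ => rfl)
  rw [Finset.prod_const, Finset.prod_const] at this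
  have h2 : (2 : ℕ) ^ (starts σ.1).card = 2 ^ (starts (conjInvol g σ).1).card := by
    exact_mod_cast this
  exact (Nat.pow_right_injective le_rfl h2).symm

/-! ### Expansion of the matrix as a weighted Gram matrix -/

/-- Matchings with `k` edges correspond to involutions with `k` 2-cycles. -/
theorem noninvTwoPow_eq_card {n k : ℕ} (w : Equiv.Perm (Fin n)) :
    noninvTwoPow n k w = (Finset.univ.filter fun σ : Invol n =>
      (starts σ.1).card = k ∧ ∀ i ∈ starts σ.1, w i < w (σ.1 i)).card := by
  classical
  have hdef : noninvTwoPow n k w = ((Finset.univ : Finset (Finset (Finset (Fin n)))).filter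
      (fun P => P.card = k ∧ (∀ p ∈ P, p.card = 2) ∧
        (∀ p ∈ P, ∀ q ∈ P, p ≠ q → p ∩ q = ∅) ∧
        (∀ p ∈ P, ∀ i ∈ p, ∀ j ∈ p, i < j → w i < w j))).card := by
    unfold noninvTwoPow
    congr!
  rw [hdef]
  symm
  have hinj : ∀ σ τ : Invol n, ∀ i j, i < σ.1 i → j < τ.1 j →
      ({i, σ.1 i} : Finset (Fin n)) = {j, τ.1 j} → i = j ∧ σ.1 i = τ.1 j := by
    intro σ τ i j hi hj h
    have h1 : i ∈ ({j, τ.1 j} : Finset (Fin n)) := h ▸ Finset.mem_insert_self _ _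
    have h2 : σ.1 i ∈ ({j, τ.1 j} : Finset (Fin n)) :=
      h ▸ Finset.mem_insert_of_mem (Finset.mem_singleton_self _)
    have h3 : j ∈ ({i, σ.1 i} : Finset (Fin n)) := h ▸ Finset.mem_insert_self _ _
    rw [Finset.mem_insert, Finset.mem_singleton] at h1 h2 h3
    grind
  refine Finset.card_bij
    (fun σ _ => (starts σ.1).image fun i => ({i, σ.1 i} : Finset (Fin n))) ?_ ?_ ?_
  · intro σ hσ
    obtain ⟨hk, hw⟩ := (Finset.mem_filter.1 hσ).2
    refine Finset.mem_filter.2 ⟨Finset.mem_univ _, ?_, ?_, ?_, ?_⟩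
    · rw [Finset.card_image_of_injOn, hk]
      intro i hi j hj h
      exact (hinj σ σ i j (mem_starts.1 hi) (mem_starts.1 hj) h).1
    · intro p hp
      obtain ⟨i, hi, rfl⟩ := Finset.mem_image.1 hp
      exact Finset.card_pair (mem_starts.1 hi).ne
    · intro p hp q hq hne
      obtain ⟨i, hi, rfl⟩ := Finset.mem_image.1 hp
      obtain ⟨j, hj, rfl⟩ := Finset.mem_image.1 hq
      rw [← Finset.disjoint_iff_inter_eq_empty, Finset.disjoint_left]
      intro x hx hx'
      rw [Finset.mem_insert, Finset.mem_singleton] at hx hx'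
      have hi' := mem_starts.1 hi
      have hj' := mem_starts.1 hj
      have e1 := σ.2 i
      have e2 := σ.2 j
      apply hne
      have : i = j := by grind
      rw [this]
    · intro p hp a ha b hb hab
      obtain ⟨i, hi, rfl⟩ := Finset.mem_image.1 hp
      rw [Finset.mem_insert, Finset.mem_singleton] at ha hb
      have hi' := mem_starts.1 hi
      rcases ha with rfl | rfl <;> rcases hb with rfl | rfl
      · exact absurd hab (lt_irrefl _)
      · exact hw _ hi
      · exact absurd hab hi'.not_gt
      · exact absurd hab (lt_irrefl _)
  · intro σ _ τ _ h
    have key : ∀ σ τ : Invol n, (starts σ.1).image (fun i => ({i, σ.1 i} : Finset (Fin n))) =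
        (starts τ.1).image (fun i => ({i, τ.1 i} : Finset (Fin n))) →
        ∀ i, i < σ.1 i → τ.1 i = σ.1 i := by
      intro σ τ h i hi
      have : ({i, σ.1 i} : Finset (Fin n)) ∈
          (starts τ.1).image (fun i => ({i, τ.1 i} : Finset (Fin n))) := by
        rw [← h]
        exact Finset.mem_image_of_mem _ (mem_starts.2 hi)
      obtain ⟨j, hj, hij⟩ := Finset.mem_image.1 this
      obtain ⟨e1, e2⟩ := hinj τ σ j i (mem_starts.1 hj) hi hij
      rw [← e2, e1]
    apply Subtype.ext
    ext i : 1
    rcases lt_trichotomy i (σ.1 i) with hi | hi | hi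
    · exact (key σ τ h i hi).symm
    · rcases lt_trichotomy i (τ.1 i) with hj | hj | hj
      · exact key τ σ h.symm i hj
      · exact hi.symm.trans hj
      · have := key τ σ h.symm (τ.1 i) (by rwa [τ.2])
        rw [τ.2, ← σ.1.injective.eq_iff, σ.2] at this
        exact this.symm
    · have := key σ τ h (σ.1 i) (by rwa [σ.2])
      rw [σ.2, ← τ.1.injective.eq_iff, τ.2] at this
      exact this
  · intro P hP
    obtain ⟨hk, hcard, hdisj, hw⟩ := (Finset.mem_filter.1 hP).2
    have hex : ∀ i, ∃ j, (i = j ∧ ∀ p ∈ P, i ∉ p) ∨ (i ≠ j ∧ {i, j} ∈ P) := by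
      intro i
      by_cases h : ∃ p ∈ P, i ∈ p
      · obtain ⟨p, hp, hip⟩ := h
        obtain ⟨a, b, hab, rfl⟩ := Finset.card_eq_two.1 (hcard p hp)
        rw [Finset.mem_insert, Finset.mem_singleton] at hip
        rcases hip with rfl | rfl
        · exact ⟨b, Or.inr ⟨hab, hp⟩⟩
        · exact ⟨a, Or.inr ⟨hab.symm, by rwa [Finset.pair_comm]⟩⟩
      · push Not at h
        exact ⟨i, Or.inl ⟨rfl, h⟩⟩
    choose f hf using hex
    have huniq : ∀ i j, i ≠ j → {i, j} ∈ P → f i = j := by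
      intro i j hij hP'
      rcases hf i with ⟨_, h⟩ | ⟨h1, h2⟩
      · exact absurd (Finset.mem_insert_self _ _) (h _ hP')
      · by_contra hne
        have hne' : ({i, f i} : Finset (Fin n)) ≠ {i, j} := by
          intro h
          have : f i ∈ ({i, j} : Finset (Fin n)) :=
            h ▸ Finset.mem_insert_of_mem (Finset.mem_singleton_self _)
          rw [Finset.mem_insert, Finset.mem_singleton] at this
          rcases this with h | h
          · exact h1 h.symm
          · exact hne h
        have := hdisj _ h2 _ hP' hne'
        have hi : i ∈ ({i, f i} : Finset (Fin n)) ∩ {i, j} := by simp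
        rw [this] at hi
        simp at hi
    have hinv : Function.Involutive f := by
      intro i
      rcases hf i with ⟨h, _⟩ | ⟨h1, h2⟩
      · rw [← h, ← h]
      · exact huniq _ _ h1.symm (by rwa [Finset.pair_comm])
    have himg : (starts (hinv.toPerm f)).image (fun i => ({i, f i} : Finset (Fin n))) = P := by
      ext p
      constructor
      · intro hp
        obtain ⟨i, hi, rfl⟩ := Finset.mem_image.1 hp
        have hi' : i < f i := mem_starts.1 hi
        rcases hf i with ⟨h, _⟩ | ⟨_, h⟩
        · exact absurd h hi'.ne
        · exact h
      · intro hp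
        obtain ⟨a, b, hab, rfl⟩ := Finset.card_eq_two.1 (hcard p hp)
        have hfa := huniq a b hab hp
        have hfb := huniq b a hab.symm (by rwa [Finset.pair_comm])
        rcases lt_or_gt_of_ne hab with h | h
        · refine Finset.mem_image.2 ⟨a, mem_starts.2 ?_, by rw [hfa]⟩
          change a < f a
          rwa [hfa]
        · refine Finset.mem_image.2 ⟨b, mem_starts.2 ?_, by rw [hfb, Finset.pair_comm]⟩
          change b < f b
          rwa [hfb]
    refine ⟨⟨hinv.toPerm f, hinv⟩, Finset.mem_filter.2 ⟨Finset.mem_univ _, ?_, ?_⟩, himg⟩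
    · rw [← hk, ← himg, Finset.card_image_of_injOn]
      intro i hi j hj h
      exact (hinj ⟨hinv.toPerm f, hinv⟩ ⟨hinv.toPerm f, hinv⟩ i j (mem_starts.1 hi)
        (mem_starts.1 hj) h).1
    · intro i hi
      have hlt : i < f i := mem_starts.1 hi
      rcases hf i with ⟨h, _⟩ | ⟨_, h⟩
      · exact absurd h hlt.ne
      · exact hw _ h i (Finset.mem_insert_self _ _) (f i)
          (Finset.mem_insert_of_mem (Finset.mem_singleton_self _)) hlt

/-- Write each condition `w i < w j` as `(1 + sign) / 2`, and transport the matchings by `u` to make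
the formula symmetric in `u` and `v`. -/
theorem cast_noninvTwoPow_eq_sum {n k : ℕ} (u v : Equiv.Perm (Fin n)) :
    (noninvTwoPow n k (v⁻¹ * u) : ℝ) = ∑ σ : Invol n, if (starts σ.1).card = k then
      ∏ i ∈ starts σ.1,
        (1 + eps (u⁻¹ i) (u⁻¹ (σ.1 i)) * eps (v⁻¹ i) (v⁻¹ (σ.1 i))) / 2 else 0 := by
  rw [noninvTwoPow_eq_card, Finset.card_filter, Nat.cast_sum,
    ← (conjInvolEquiv u).sum_comp (fun σ : Invol n => if (starts σ.1).card = k then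
      ∏ i ∈ starts σ.1,
        (1 + eps (u⁻¹ i) (u⁻¹ (σ.1 i)) * eps (v⁻¹ i) (v⁻¹ (σ.1 i))) / 2 else 0)]
  refine Finset.sum_congr rfl fun σ _ => ?_
  change _ = if (starts (conjInvol u σ).1).card = k then
      ∏ i ∈ starts (conjInvol u σ).1, (1 + eps (u⁻¹ i) (u⁻¹ ((conjInvol u σ).1 i)) *
        eps (v⁻¹ i) (v⁻¹ ((conjInvol u σ).1 i))) / 2 else 0
  rw [card_starts_conjInvol]
  by_cases hk : (starts σ.1).card = k
  · rw [if_pos hk, ← prod_starts_conj σ.1 (conjInvol u σ).1 u σ.2 (conjInvol_apply u σ)]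
    · have hu : ∀ j, u⁻¹ (u j) = j := u.symm_apply_apply
      simp only [conjInvol_apply, hu]
      have h : ∀ i ∈ starts σ.1, (1 + eps i (σ.1 i) * eps (v⁻¹ (u i)) (v⁻¹ (u (σ.1 i)))) / 2 =
          if (v⁻¹ * u) i < (v⁻¹ * u) (σ.1 i) then (1 : ℝ) else 0 := by
        intro i hi
        rw [eps_of_lt (mem_starts.1 hi)]
        by_cases h : v⁻¹ (u i) < v⁻¹ (u (σ.1 i))
        · rw [eps_of_lt h, if_pos (by exact h)]
          norm_num
        · rw [eps, if_neg h, if_neg (by exact h)]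
          norm_num
      rw [Finset.prod_congr rfl h, Finset.prod_boole]
      simp only [hk, true_and, Nat.cast_ite, Nat.cast_one, Nat.cast_zero]
      congr
    · intro j
      rw [(conjInvol u σ).2]
      by_cases hj : j = (conjInvol u σ).1 j
      · rw [← hj]
      · rw [eps_swap (fun H => hj (u⁻¹.injective H)), eps_swap (fun H => hj (v⁻¹.injective H))]
        ring
  · simp [hk]

/-- Every 2-cycle of `π` is a 2-cycle of `σ`. -/
def IsSubInvol {n : ℕ} (π σ : Invol n) : Prop := ∀ i, π.1 i = i ∨ π.1 i = σ.1 i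

/-- Subsets of the 2-cycles of `σ` are the same as involutions `π` contained in `σ`. -/
theorem sum_powerset_starts {n : ℕ} [∀ π σ : Invol n, Decidable (IsSubInvol π σ)]
    (σ : Invol n) (G : Fin n → Fin n → ℝ) :
    ∑ S ∈ (starts σ.1).powerset, ∏ i ∈ S, G i (σ.1 i) =
      ∑ π : Invol n, if IsSubInvol π σ then ∏ i ∈ starts π.1, G i (π.1 i) else 0 := by
  rw [← Finset.sum_filter]
  symm
  refine Finset.sum_bij (fun π _ => starts π.1) ?_ ?_ ?_ ?_
  · intro π hπ
    have hπ := (Finset.mem_filter.1 hπ).2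
    rw [Finset.mem_powerset]
    intro i hi
    rw [mem_starts] at hi ⊢
    rcases hπ i with h | h
    · exact absurd h hi.ne'
    · rwa [← h]
  · intro π hπ π' hπ' h
    have hπ := (Finset.mem_filter.1 hπ).2
    have hπ' := (Finset.mem_filter.1 hπ').2
    have key : ∀ π π' : Invol n, IsSubInvol π σ → IsSubInvol π' σ → starts π.1 = starts π'.1 →
        ∀ i, π.1 i ≠ i → π'.1 i = π.1 i := by
      intro π π' hπ hπ' h i hi
      have hi' : π.1 i = σ.1 i := (hπ i).resolve_left hi
      rcases lt_or_gt_of_ne hi with h1 | h1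
      · have h2 : π.1 i ∈ starts π'.1 := by
          rw [← h, mem_starts, π.2]
          exact h1
        have h3 := (hπ' (π.1 i)).resolve_left (mem_starts.1 h2).ne'
        rw [hi', σ.2] at h3
        rw [hi', ← h3, π'.2, h3]
      · have h2 : i ∈ starts π'.1 := by
          rw [← h, mem_starts]
          exact h1
        rw [(hπ' i).resolve_left (mem_starts.1 h2).ne', hi']
    apply Subtype.ext
    ext i : 1
    by_cases hi : π.1 i = i
    · by_cases hi' : π'.1 i = i
      · rw [hi, hi']
      · exact key π' π hπ' hπ h.symm i hi'
    · exact (key π π' hπ hπ' h i hi).symm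
  · intro S hS
    rw [Finset.mem_powerset] at hS
    have hinv : Function.Involutive (fun i => if i ∈ S ∨ σ.1 i ∈ S then σ.1 i else i) := by
      intro i
      by_cases h : i ∈ S ∨ σ.1 i ∈ S
      · simp only [h, if_true, σ.2, h.symm]
      · simp only [h, if_false]
    refine ⟨⟨hinv.toPerm _, hinv⟩, Finset.mem_filter.2 ⟨Finset.mem_univ _, ?_⟩, ?_⟩
    · intro i
      change (if i ∈ S ∨ σ.1 i ∈ S then σ.1 i else i) = i ∨
        (if i ∈ S ∨ σ.1 i ∈ S then σ.1 i else i) = σ.1 i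
      split_ifs
      · exact Or.inr rfl
      · exact Or.inl rfl
    · ext i
      rw [mem_starts]
      change i < (if i ∈ S ∨ σ.1 i ∈ S then σ.1 i else i) ↔ i ∈ S
      constructor
      · intro h
        split_ifs at h with h1
        · refine h1.resolve_right fun h2 => ?_
          have := mem_starts.1 (hS h2)
          rw [σ.2] at this
          exact absurd h this.not_gt
        · exact absurd h (lt_irrefl _)
      · intro h
        rw [if_pos (Or.inl h)]
        exact mem_starts.1 (hS h)
  · intro π hπ
    have hπ := (Finset.mem_filter.1 hπ).2
    refine Finset.prod_congr rfl fun i hi => ?_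
    rw [(hπ i).resolve_left (mem_starts.1 hi).ne']

open Classical in
/-- The weight of `π` in the expansion of `noninvTwoPow n k`: up to the factor `2⁻ᵏ`, the number
of involutions with `k` 2-cycles containing `π`. -/
noncomputable def weight {n : ℕ} (k : ℕ) (π : Invol n) : ℝ :=
  (1 / 2) ^ k * ((Finset.univ.filter fun σ : Invol n =>
    (starts σ.1).card = k ∧ IsSubInvol π σ).card : ℝ)

theorem weight_nonneg {n : ℕ} (k : ℕ) (π : Invol n) : 0 ≤ weight k π := by
  unfold weight; positivity

theorem weight_mem {n : ℕ} (K : Subfield ℝ) (k : ℕ) (π : Invol n) : weight k π ∈ K :=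
  K.mul_mem (K.pow_mem (K.div_mem K.one_mem (by exact_mod_cast natCast_mem K 2)) _)
    (natCast_mem K _)

theorem weight_conjInvol {n : ℕ} (k : ℕ) (g : Equiv.Perm (Fin n)) (π : Invol n) :
    weight k (conjInvol g π) = weight k π := by
  classical
  unfold weight
  congr 2
  symm
  refine Finset.card_equiv (conjInvolEquiv g) fun σ => ?_
  rw [Finset.mem_filter, Finset.mem_filter]
  change _ ↔ _ ∧ (starts (conjInvol g σ).1).card = k ∧
    IsSubInvol (conjInvol g π) (conjInvol g σ)
  rw [card_starts_conjInvol]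
  have : IsSubInvol (conjInvol g π) (conjInvol g σ) ↔ IsSubInvol π σ := by
    unfold IsSubInvol
    rw [g.surjective.forall]
    simp only [conjInvol_apply, g.injective.eq_iff]
  rw [this]
  simp

/-- The matrix `noninvTwoPow n k (v⁻¹ * u)` is the weighted Gram matrix of the sign vectors
`π ↦ edgeSign π u⁻¹`. -/
theorem cast_noninvTwoPow_eq_gram {n k : ℕ} (u v : Equiv.Perm (Fin n)) :
    (noninvTwoPow n k (v⁻¹ * u) : ℝ) =
      ∑ π : Invol n, weight k π * (edgeSign π.1 u⁻¹ * edgeSign π.1 v⁻¹) := by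
  classical
  have h : ∀ σ : Invol n, (if (starts σ.1).card = k then ∏ i ∈ starts σ.1,
        (1 + eps (u⁻¹ i) (u⁻¹ (σ.1 i)) * eps (v⁻¹ i) (v⁻¹ (σ.1 i))) / 2 else 0) =
      ∑ π : Invol n, if (starts σ.1).card = k ∧ IsSubInvol π σ then
        (1 / 2) ^ k * (edgeSign π.1 u⁻¹ * edgeSign π.1 v⁻¹) else 0 := by
    intro σ
    by_cases hk : (starts σ.1).card = k
    · have h2 := sum_powerset_starts σ
        (fun a b => eps (u⁻¹ a) (u⁻¹ b) * eps (v⁻¹ a) (v⁻¹ b))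
      rw [if_pos hk, Finset.prod_div_distrib, Finset.prod_one_add, h2, Finset.prod_const, hk,
        div_eq_mul_inv, mul_comm, Finset.mul_sum]
      refine Finset.sum_congr rfl fun π _ => ?_
      simp only [true_and, Finset.prod_mul_distrib, edgeSign, mul_ite, mul_zero, one_div,
        inv_pow]
    · simp [hk]
  rw [cast_noninvTwoPow_eq_sum, Finset.sum_congr rfl fun σ _ => h σ, Finset.sum_comm]
  refine Finset.sum_congr rfl fun π _ => ?_
  rw [← Finset.sum_filter, Finset.sum_const, nsmul_eq_mul, weight]
  ring

/-! ### Eigenvalues -/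

/-- The weighted Gram matrix with the two factors exchanged; it acts on functions of involutions
and has the same nonzero eigenvalues as the matrix of `noninvTwoPow n k (v⁻¹ * u)`. -/
noncomputable def dualGram (n k : ℕ) : Matrix (Invol n) (Invol n) ℝ :=
  Matrix.of fun a b => (∑ u : Equiv.Perm (Fin n), edgeSign a.1 u⁻¹ * edgeSign b.1 u⁻¹) * weight k b

theorem edgeSign_mem {n : ℕ} (K : Subfield ℝ) (σ g : Equiv.Perm (Fin n)) : edgeSign σ g ∈ K := by
  refine prod_mem fun i _ => ?_
  unfold eps
  split_ifs
  · exact K.one_mem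
  · exact K.neg_mem K.one_mem

theorem dualGram_mem {n k : ℕ} (K : Subfield ℝ) (a b : Invol n) : dualGram n k a b ∈ K :=
  K.mul_mem (sum_mem fun _ _ => K.mul_mem (edgeSign_mem K _ _) (edgeSign_mem K _ _))
    (weight_mem K k b)

theorem commute_dualGram {n k : ℕ} (g : Equiv.Perm (Fin n)) :
    Commute (dualGram n k) (involRep n g) := by
  rw [commute_involRep_iff]
  intro a b
  simp only [dualGram, Matrix.of_apply, weight_conjInvol]
  have h : ∑ u : Equiv.Perm (Fin n), edgeSign a.1 u⁻¹ * edgeSign b.1 u⁻¹ =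
      ∑ u : Equiv.Perm (Fin n), edgeSign (conjInvol g a).1 u⁻¹ * edgeSign (conjInvol g b).1 u⁻¹ *
        (edgeSign a.1 g * edgeSign b.1 g) := by
    rw [← Equiv.sum_comp (Equiv.mulLeft g⁻¹)]
    refine Finset.sum_congr rfl fun u _ => ?_
    rw [Equiv.coe_mulLeft, mul_inv_rev, inv_inv, edgeSign_conjInvol, edgeSign_conjInvol]
    ring
  rw [h, ← Finset.sum_mul]
  have ea := edgeSign_mul_self a.1 g
  linear_combination (-(∑ u : Equiv.Perm (Fin n), edgeSign (conjInvol g a).1 u⁻¹ *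
    edgeSign (conjInvol g b).1 u⁻¹) * weight k b * edgeSign b.1 g) * ea

/-- Real eigenvalues of the matrix are nonnegative, since it is a weighted Gram matrix with
nonnegative weights, and lie in every subfield of `ℝ`: a nonzero one is an eigenvalue of the
intertwiner `dualGram`. -/
theorem eigenvalue_nonneg_and_mem {n k : ℕ} (K : Subfield ℝ) (t : ℝ) (x : Equiv.Perm (Fin n) → ℝ)
    (hx : x ≠ 0) (h : ∀ u, ∑ v, (noninvTwoPow n k (v⁻¹ * u) : ℝ) * x v = t * x u) :
    0 ≤ t ∧ t ∈ K := by
  set y : Invol n → ℝ := fun π => ∑ v, edgeSign π.1 v⁻¹ * x v with hy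
  have hM : ∀ u, ∑ π : Invol n, weight k π * edgeSign π.1 u⁻¹ * y π = t * x u := by
    intro u
    rw [← h u]
    simp only [hy, cast_noninvTwoPow_eq_gram, Finset.mul_sum, Finset.sum_mul]
    rw [Finset.sum_comm]
    refine Finset.sum_congr rfl fun v _ => Finset.sum_congr rfl fun π _ => ?_
    ring
  constructor
  · have hq : ∑ π : Invol n, weight k π * (y π * y π) = t * ∑ u, x u * x u := by
      have : ∀ π, weight k π * (y π * y π) = ∑ u, x u * (weight k π * edgeSign π.1 u⁻¹ * y π) := by
        intro π
        conv_lhs => rw [hy]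
        simp only [Finset.mul_sum, Finset.sum_mul]
        refine Finset.sum_congr rfl fun u _ => ?_
        simp only [hy, Finset.mul_sum]
        refine Finset.sum_congr rfl fun v _ => ?_
        ring
      rw [Finset.sum_congr rfl fun π _ => this π, Finset.sum_comm, Finset.mul_sum]
      refine Finset.sum_congr rfl fun u _ => ?_
      rw [← Finset.mul_sum, hM]
      ring
    obtain ⟨u, hu⟩ := Function.ne_iff.1 hx
    have hpos : 0 < ∑ u, x u * x u :=
      Finset.sum_pos' (fun u _ => mul_self_nonneg _) ⟨u, Finset.mem_univ _, mul_self_pos.2 hu⟩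
    have h0 : 0 ≤ t * ∑ u, x u * x u := by
      rw [← hq]
      exact Finset.sum_nonneg fun π _ => mul_nonneg (weight_nonneg k π) (mul_self_nonneg _)
    exact nonneg_of_mul_nonneg_left h0 hpos
  · by_cases ht : t = 0
    · rw [ht]
      exact K.zero_mem
    refine eigenvalue_mem_subfield K (involRep n) ?_ involRep_transpose
      transpose_eq_of_commute_involRep (dualGram n k) (dualGram_mem K) commute_dualGram t y ?_ ?_
    · intro g a b
      rw [involRep_apply]
      split_ifs
      · exact edgeSign_mem K _ _
      · exact K.zero_mem
    · intro hy0
      apply hx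
      funext u
      have := hM u
      simp only [hy0, Pi.zero_apply, mul_zero, Finset.sum_const_zero] at this
      exact (mul_eq_zero.1 this.symm).resolve_left ht
    · funext a
      rw [Matrix.mulVec, dotProduct, Pi.smul_apply, smul_eq_mul]
      have : t * y a = ∑ u, edgeSign a.1 u⁻¹ * (t * x u) := by
        simp only [hy, Finset.mul_sum]
        refine Finset.sum_congr rfl fun v _ => ?_
        ring
      rw [this]
      simp only [← hM, dualGram, Matrix.of_apply, Finset.mul_sum, Finset.sum_mul]
      rw [Finset.sum_comm]
      refine Finset.sum_congr rfl fun u _ => Finset.sum_congr rfl fun π _ => ?_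
      ring

/-- Every complex eigenvalue of the `n!×n!` matrix with `(u,v)` entry
`noninv_{(2^k,1^{n-2k})}(v⁻¹·u)` is a nonnegative integer. -/
theorem nuTwoPow_integer_spectrum (n k : ℕ) (hn : 1 ≤ n) (hk : k ≤ n / 2) (z : ℂ)
    (hz : (Matrix.charpoly (Matrix.of (fun u v : Equiv.Perm (Fin n) =>
      (noninvTwoPow n k (v⁻¹ * u) : ℂ)))).IsRoot z) :
    ∃ m : ℕ, z = m := by
  let A : Matrix (Equiv.Perm (Fin n)) (Equiv.Perm (Fin n)) ℤ :=
    Matrix.of fun u v => (noninvTwoPow n k (v⁻¹ * u) : ℤ)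
  let R : Matrix (Equiv.Perm (Fin n)) (Equiv.Perm (Fin n)) ℝ :=
    Matrix.of fun u v => (noninvTwoPow n k (v⁻¹ * u) : ℝ)
  have hAC : Matrix.of (fun u v : Equiv.Perm (Fin n) => (noninvTwoPow n k (v⁻¹ * u) : ℂ)) =
      A.map (algebraMap ℤ ℂ) := by
    ext u v
    simp [A]
  have hRC : Matrix.of (fun u v : Equiv.Perm (Fin n) => (noninvTwoPow n k (v⁻¹ * u) : ℂ)) =
      R.map (algebraMap ℝ ℂ) := by
    ext u v
    simp [R]
  have hzInt : IsIntegral ℤ z := by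
    refine ⟨A.charpoly, A.charpoly_monic, ?_⟩
    rw [hAC, Matrix.charpoly_map, Polynomial.IsRoot, Polynomial.eval_map] at hz
    exact hz
  have hR : R.IsHermitian := by
    ext u v
    simp only [Matrix.conjTranspose_apply, star_trivial, R, Matrix.of_apply,
      cast_noninvTwoPow_eq_gram]
    refine Finset.sum_congr rfl fun π _ => ?_
    ring
  rw [hRC, Matrix.charpoly_map, hR.charpoly_eq, Polynomial.IsRoot, Polynomial.eval_map,
    Polynomial.eval₂_finsetProd, Finset.prod_eq_zero_iff] at hz
  obtain ⟨i, _, hi⟩ := hz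
  have hzt : z = ((hR.eigenvalues i : ℝ) : ℂ) := by
    simpa [sub_eq_zero] using hi
  have hv := hR.mulVec_eigenvectorBasis i
  have hv0 := hR.eigenvectorBasis.orthonormal.ne_zero i
  obtain ⟨h0, q, hq⟩ := eigenvalue_nonneg_and_mem (n := n) (k := k) (Rat.castHom ℝ).fieldRange
    (hR.eigenvalues i) (fun v => hR.eigenvectorBasis i v) (fun h => hv0 (by
      ext v
      exact congrFun h v)) (fun u => by
      have := congrFun hv u
      simpa [Matrix.mulVec, dotProduct, R] using this)
  have hzq : z = algebraMap ℚ ℂ q := by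
    rw [hzt, ← hq]
    simp
  rw [hzq, isIntegral_algebraMap_iff (algebraMap ℚ ℂ).injective,
    IsIntegrallyClosed.isIntegral_iff] at hzInt
  obtain ⟨m, hm⟩ := hzInt
  have hm' : (hR.eigenvalues i) = (m : ℝ) := by
    rw [← hq, ← hm]
    simp
  have hm0 : 0 ≤ m := by
    rw [hm'] at h0
    exact_mod_cast h0
  lift m to ℕ using hm0
  refine ⟨m, ?_⟩
  rw [hzt, hm']
  simp
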